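/- Let R₀ > 0. There exist a positive function φ ∈ C^∞(ℝ², ℝ), and constants ε > 0, h₀ > 0 and C > 0, such that for every W ∈ C¹(ℝ², ℝ) with sup_{B(0,R₀)} |W| ≤ ε and sup_{B(0,R₀)} ‖∇W‖ ≤ ε, every h ∈ (0,h₀], and every u ∈ C_c^∞(B(0,R₀), ℂ): h ∫_{B(0,R₀)} e^{2φ(x)/h} (|u(x)|² + |h∇u(x)|²) dx ≤ C ∫_{B(0,R₀)} e^{2φ(x)/h} |(−h²Δ + W)u(x)|² dx. -/

import Mathlib

open MeasureTheory Metric Set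

noncomputable section

abbrev E2 := EuclideanSpace ℝ (Fin 2)

/-- The `i`-th standard basis vector of ℝ². -/
def basis2 (i : Fin 2) : E2 := EuclideanSpace.single i (1 : ℝ)

/-- Laplacian of a complex-valued function on ℝ². -/
def lapC (u : E2 → ℂ) (x : E2) : ℂ :=
  ∑ i, fderiv ℝ (fun y => fderiv ℝ u y (basis2 i)) x (basis2 i)

/-- Squared Euclidean norm of the gradient of a complex-valued function. -/
def gradSq (u : E2 → ℂ) (x : E2) : ℝ := ∑ i, ‖fderiv ℝ u x (basis2 i)‖ ^ 2

/-- Euclidean norm of the gradient of a real-valued function. -/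
def gradNormR (W : E2 → ℝ) (x : E2) : ℝ :=
  Real.sqrt (∑ i, (fderiv ℝ W x (basis2 i)) ^ 2)

/-- The semiclassical Schrödinger operator `(−h²Δ + W)u`. -/
def schrodW (h : ℝ) (W : E2 → ℝ) (u : E2 → ℂ) (x : E2) : ℂ :=
  -(h ^ 2 : ℂ) * lapC u x + (W x : ℂ) * u x

/-!
A single weight `φ = g² / 2 + 1` suffices, where `g x = ⟪e, x⟫ + a` is an affine coordinate shifted
so that `g ≥ M + 1` on the bounded set `Ω`, with `M` a bound for `|W|` and `|∂ₑW|`. Then `φ` has no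
critical point in `Ω` and no gluing of weights is needed.

For `v = exp (φ / h) u`, conjugation turns `-h²Δ + W` into `A + hB`, with symmetric part
`A = -h²Δ + W - g²` and skew part `hB = h (g ∂ₑ + ∂ₑ g)`. In
`‖(A + hB)v‖² = ‖Av‖² + h²‖Bv‖² + 2h ⟪Av, Bv⟫` the cross term is a commutator, and integration by
parts gives `⟪Av, Bv⟫ = 2h² ‖∂ₑv‖² + ∫ (2g² - g ∂ₑW) |v|²`; hence it controls `h ‖g v‖²`, because
`g` dominates `∂ₑW`. The remaining derivatives are recovered from the energy identity
`⟪Av, v⟫ = h² ‖∇v‖² + ∫ (W - g²) |v|²` and Cauchy–Schwarz.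
-/

open scoped InnerProductSpace Laplacian ContDiff

section Calculus

variable {E F : Type*} [NormedAddCommGroup E] [NormedSpace ℝ E]
  [NormedAddCommGroup F] [NormedSpace ℝ F] {v : E → F}

lemma contDiff_fderiv_apply (hv : ContDiff ℝ 2 v) (c : E) :
    ContDiff ℝ 1 (fun y => fderiv ℝ v y c) :=
  (hv.fderiv_right (m := 1) (by norm_num)).clm_apply contDiff_const

lemma continuous_fderiv_apply (hv : ContDiff ℝ 1 v) (c : E) :
    Continuous (fun y => fderiv ℝ v y c) :=
  (hv.continuous_fderiv one_ne_zero).clm_apply continuous_const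

lemma fderiv_fderiv_apply (hv : ContDiff ℝ 2 v) (x c d : E) :
    fderiv ℝ (fun y => fderiv ℝ v y c) x d = fderiv ℝ (fderiv ℝ v) x d c := by
  have hd : DifferentiableAt ℝ (fderiv ℝ v) x :=
    (hv.fderiv_right (m := 1) (by norm_num)).differentiable one_ne_zero x
  rw [fderiv_clm_apply hd (differentiableAt_const c)]
  simp

lemma fderiv_fderiv_apply_comm (hv : ContDiff ℝ 2 v) (x c d : E) :
    fderiv ℝ (fun y => fderiv ℝ v y c) x d = fderiv ℝ (fun y => fderiv ℝ v y d) x c := by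
  rw [fderiv_fderiv_apply hv, fderiv_fderiv_apply hv]
  exact hv.contDiffAt.isSymmSndFDerivAt (by simp) d c

end Calculus

section OrthonormalBasis

variable {ι E F : Type*} [Fintype ι] [NormedAddCommGroup E] [InnerProductSpace ℝ E]
  [NormedAddCommGroup F] [NormedSpace ℝ F]

lemma sum_inner_smul_apply (b : OrthonormalBasis ι ℝ E) (L : E →L[ℝ] F) (e : E) :
    ∑ i, ⟪e, b i⟫_ℝ • L (b i) = L e := by
  conv_rhs => rw [← b.sum_repr' e]
  simp [real_inner_comm]

variable [FiniteDimensional ℝ E] {v : E → F}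

lemma laplacian_eq_sum_fderiv_fderiv (b : OrthonormalBasis ι ℝ E) (hv : ContDiff ℝ 2 v) (x : E) :
    Δ v x = ∑ i, fderiv ℝ (fun y => fderiv ℝ v y (b i)) x (b i) := by
  simp [InnerProductSpace.laplacian_eq_iteratedFDeriv_orthonormalBasis v b,
    iteratedFDeriv_two_apply, fderiv_fderiv_apply hv]

lemma continuous_laplacian (hv : ContDiff ℝ 2 v) : Continuous (Δ v) := by
  rw [funext (laplacian_eq_sum_fderiv_fderiv (stdOrthonormalBasis ℝ E) hv)]
  exact continuous_finsetSum _ fun i _ =>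
    continuous_fderiv_apply (contDiff_fderiv_apply hv _) _

lemma laplacian_of_notMem_tsupport {x : E} (hx : x ∉ tsupport v) : Δ v x = 0 := by
  rw [(InnerProductSpace.laplacian_congr_nhds
    (notMem_tsupport_iff_eventuallyEq.1 hx)).eq_of_nhds]
  exact congrFun InnerProductSpace.laplacian_const x

end OrthonormalBasis

section IntegrationByParts

lemma integrable_of_eq_zero_off_tsupport {X F G : Type*} [TopologicalSpace X] [MeasurableSpace X]
    [OpensMeasurableSpace X] {μ : Measure X} [IsFiniteMeasureOnCompacts μ] [NormedAddCommGroup F]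
    [Zero G] {f : X → F} {v : X → G} (hv : HasCompactSupport v) (hf : Continuous f)
    (hzero : ∀ x ∉ tsupport v, f x = 0) : Integrable f μ :=
  hf.integrable_of_hasCompactSupport (HasCompactSupport.intro' hv (isClosed_tsupport v) hzero)

variable {E F : Type*} [NormedAddCommGroup E] [NormedSpace ℝ E] [FiniteDimensional ℝ E]
  [MeasurableSpace E] [BorelSpace E] {μ : Measure E} [μ.IsAddHaarMeasure] [NormedAddCommGroup F]

lemma integral_fderiv_apply_eq_zero [NormedSpace ℝ F] {f : E → F} (hf : ContDiff ℝ 1 f)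
    (hsupp : HasCompactSupport f) (c : E) : ∫ x, fderiv ℝ f x c ∂μ = 0 := by
  have hint : Integrable (fun x => fderiv ℝ f x c) μ :=
    (continuous_fderiv_apply hf c).integrable_of_hasCompactSupport (hsupp.fderiv_apply ℝ c)
  simpa using integral_smul_fderiv_eq_neg_fderiv_smul_of_integrable (𝕜 := ℝ) (μ := μ)
    (f := fun _ => (1 : ℝ)) (g := f) (v := c) (by simp) (by simpa using hint)
    (by simpa using hf.continuous.integrable_of_hasCompactSupport hsupp) (by simp)
    fun x _ => hf.differentiable one_ne_zero x

lemma integral_inner_fderiv_left_eq_neg_right [InnerProductSpace ℝ F] {f g : E → F}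
    (hf : ContDiff ℝ 1 f) (hg : ContDiff ℝ 1 g) (hsupp : HasCompactSupport g) (c : E) :
    ∫ x, ⟪fderiv ℝ f x c, g x⟫_ℝ ∂μ = -∫ x, ⟪f x, fderiv ℝ g x c⟫_ℝ ∂μ := by
  have hdiv := integral_bilinear_fderiv_right_eq_neg_left_of_integrable (μ := μ) (v := c)
    (B := innerSL ℝ (E := F)) (f := f) (g := g)
    (integrable_of_eq_zero_off_tsupport hsupp ((continuous_fderiv_apply hf c).inner hg.continuous)
      fun x hx => by simp [image_eq_zero_of_notMem_tsupport hx])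
    (integrable_of_eq_zero_off_tsupport hsupp (hf.continuous.inner (continuous_fderiv_apply hg c))
      fun x hx => by simp [fderiv_of_notMem_tsupport ℝ hx])
    (integrable_of_eq_zero_off_tsupport hsupp (hf.continuous.inner hg.continuous)
      fun x hx => by simp [image_eq_zero_of_notMem_tsupport hx])
    (fun x _ => hf.differentiable one_ne_zero x) fun x _ => hg.differentiable one_ne_zero x
  exact (neg_eq_iff_eq_neg.2 hdiv).symm

end IntegrationByParts

section ConvexWeight

variable {E : Type*} [NormedAddCommGroup E] [InnerProductSpace ℝ E]

/-- The affine coordinate `⟪e, x⟫ + a`; the gradient of `convexWeight e a` at `x` is this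
number times `e`. -/
def affineCoord (e : E) (a : ℝ) (x : E) : ℝ := ⟪e, x⟫_ℝ + a

/-- The Carleman weight `φ`: a uniformly convex function of one affine coordinate. The summand `1`
is irrelevant for the estimate and only makes the weight positive. -/
def convexWeight (e : E) (a : ℝ) (x : E) : ℝ := affineCoord e a x ^ 2 / 2 + 1

lemma contDiff_affineCoord {n : ℕ∞ω} (e : E) (a : ℝ) : ContDiff ℝ n (affineCoord e a) :=
  (innerSL ℝ e).contDiff.add contDiff_const

lemma contDiff_convexWeight {n : ℕ∞ω} (e : E) (a : ℝ) : ContDiff ℝ n (convexWeight e a) :=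
  (((contDiff_affineCoord e a).pow 2).div_const 2).add contDiff_const

lemma convexWeight_pos (e : E) (a : ℝ) (x : E) : 0 < convexWeight e a x := by
  unfold convexWeight
  positivity

lemma hasFDerivAt_affineCoord (e : E) (a : ℝ) (x : E) :
    HasFDerivAt (affineCoord e a) (innerSL ℝ e) x :=
  (innerSL ℝ e).hasFDerivAt.add_const a

lemma hasFDerivAt_convexWeight (e : E) (a : ℝ) (x : E) :
    HasFDerivAt (convexWeight e a) (affineCoord e a x • innerSL ℝ e) x := by
  have hsq := ((hasFDerivAt_affineCoord e a x).pow 2).mul_const (2 : ℝ)⁻¹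
  refine (hsq.add_const 1).congr_fderiv ?_
  ext c
  simp only [Nat.add_one_sub_one, pow_one, nsmul_eq_mul, Nat.cast_ofNat,
    smul_apply, innerSL_apply_apply, smul_eq_mul]
  ring

lemma le_affineCoord_of_norm_le {e x : E} (he : ‖e‖ = 1) {R : ℝ} (hx : ‖x‖ ≤ R) (s : ℝ) :
    s ≤ affineCoord e (R + s) x := by
  have hcs := abs_real_inner_le_norm e x
  rw [he, one_mul] at hcs
  unfold affineCoord
  linarith [neg_le_of_abs_le hcs]

lemma fderiv_sub_affineCoord_sq {e : E} (he : ‖e‖ = 1) (a : ℝ) {W : E → ℝ} {x : E}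
    (hW : DifferentiableAt ℝ W x) :
    fderiv ℝ (fun y => W y - affineCoord e a y ^ 2) x e =
      fderiv ℝ W x e - 2 * affineCoord e a x := by
  have hderiv : HasFDerivAt (fun y => W y - affineCoord e a y ^ 2) _ x :=
    hW.hasFDerivAt.sub ((hasFDerivAt_affineCoord e a x).pow 2)
  rw [hderiv.fderiv]
  simp [he]

end ConvexWeight

section Operators

variable {ι E F : Type*} [Fintype ι] [NormedAddCommGroup E] [InnerProductSpace ℝ E]
  [NormedAddCommGroup F] [NormedSpace ℝ F]

/-- The squared Hilbert–Schmidt norm of the derivative of a vector-valued function, computed in an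
orthonormal basis: this is `‖∇u‖²` for scalar `u`. -/
def fderivSqNorm (b : OrthonormalBasis ι ℝ E) (u : E → F) (x : E) : ℝ :=
  ∑ i, ‖fderiv ℝ u x (b i)‖ ^ 2

/-- The semiclassical Schrödinger operator `-h²Δ + q`, acting on vector-valued functions. -/
def schrodinger [FiniteDimensional ℝ E] (h : ℝ) (q : E → ℝ) (u : E → F) (x : E) : F :=
  -(h ^ 2) • Δ u x + q x • u x

/-- The operator `u ↦ g ∂ₑu + ∂ₑ(g u)` with `g = affineCoord e a` and `e` a unit vector. Times `h`,
it is the skew-adjoint part of `-h²Δ` conjugated by `exp (convexWeight e a / h)`. -/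
def skewTransport (e : E) (a : ℝ) (u : E → F) (x : E) : F :=
  (2 * affineCoord e a x) • fderiv ℝ u x e + u x

/-- Conjugation by the Carleman weight: `exp (φ / h) u` with `φ = convexWeight e a`. -/
def expTwist (e : E) (a h : ℝ) (u : E → F) (x : E) : F :=
  Real.exp (convexWeight e a x / h) • u x

/-- The density that dominates `exp (2φ / h) (‖u‖² + h² ‖∇u‖²)` when `v = exp (φ / h) u`. -/
def twistedEnergy (b : OrthonormalBasis ι ℝ E) (e : E) (a h : ℝ) (v : E → F) (x : E) : ℝ :=
  2 * h ^ 2 * fderivSqNorm b v x + (2 * affineCoord e a x ^ 2 + 1) * ‖v x‖ ^ 2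

/-- The density of the quadratic form of half the commutator of `schrodinger h q` and
`skewTransport e a`. -/
def commutatorDensity (e : E) (a h : ℝ) (q : E → ℝ) (v : E → F) (x : E) : ℝ :=
  2 * h ^ 2 * ‖fderiv ℝ v x e‖ ^ 2 - fderiv ℝ q x e * affineCoord e a x * ‖v x‖ ^ 2

/-- The density of the quadratic form of `schrodinger h q`. -/
def energyDensity (b : OrthonormalBasis ι ℝ E) (h : ℝ) (q : E → ℝ) (v : E → F) (x : E) : ℝ :=
  h ^ 2 * fderivSqNorm b v x + q x * ‖v x‖ ^ 2

lemma fderivSqNorm_nonneg (b : OrthonormalBasis ι ℝ E) (u : E → F) (x : E) :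
    0 ≤ fderivSqNorm b u x :=
  Finset.sum_nonneg fun _ _ => sq_nonneg _

lemma continuous_fderivSqNorm (b : OrthonormalBasis ι ℝ E) {v : E → F}
    (hv : ContDiff ℝ 1 v) : Continuous (fderivSqNorm b v) :=
  continuous_finsetSum _ fun i _ => (continuous_fderiv_apply hv (b i)).norm.pow 2

lemma fderivSqNorm_of_notMem_tsupport (b : OrthonormalBasis ι ℝ E) {v : E → F}
    {x : E} (hx : x ∉ tsupport v) : fderivSqNorm b v x = 0 := by
  simp [fderivSqNorm, fderiv_of_notMem_tsupport ℝ hx]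

lemma twistedEnergy_of_notMem_tsupport (b : OrthonormalBasis ι ℝ E) (e : E) (a h : ℝ)
    {v : E → F} {x : E} (hx : x ∉ tsupport v) : twistedEnergy b e a h v x = 0 := by
  simp [twistedEnergy, image_eq_zero_of_notMem_tsupport hx, fderivSqNorm_of_notMem_tsupport b hx]

lemma commutatorDensity_of_notMem_tsupport (e : E) (a h : ℝ) (q : E → ℝ) {v : E → F} {x : E}
    (hx : x ∉ tsupport v) : commutatorDensity e a h q v x = 0 := by
  simp [commutatorDensity, image_eq_zero_of_notMem_tsupport hx, fderiv_of_notMem_tsupport ℝ hx]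

lemma energyDensity_of_notMem_tsupport (b : OrthonormalBasis ι ℝ E) (h : ℝ) (q : E → ℝ)
    {v : E → F} {x : E} (hx : x ∉ tsupport v) : energyDensity b h q v x = 0 := by
  simp [energyDensity, image_eq_zero_of_notMem_tsupport hx, fderivSqNorm_of_notMem_tsupport b hx]

lemma skewTransport_of_notMem_tsupport (e : E) (a : ℝ) {v : E → F} {x : E}
    (hx : x ∉ tsupport v) : skewTransport e a v x = 0 := by
  simp [skewTransport, image_eq_zero_of_notMem_tsupport hx, fderiv_of_notMem_tsupport ℝ hx]

lemma continuous_skewTransport (e : E) (a : ℝ) {v : E → F} (hv : ContDiff ℝ 1 v) :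
    Continuous (skewTransport e a v) :=
  ((continuous_const.mul (contDiff_affineCoord (n := 0) e a).continuous).smul
    (continuous_fderiv_apply hv e)).add hv.continuous

variable [FiniteDimensional ℝ E]

lemma schrodinger_of_notMem_tsupport (h : ℝ) (q : E → ℝ) {v : E → F} {x : E}
    (hx : x ∉ tsupport v) : schrodinger h q v x = 0 := by
  simp [schrodinger, image_eq_zero_of_notMem_tsupport hx, laplacian_of_notMem_tsupport hx]

lemma continuous_schrodinger (h : ℝ) {q : E → ℝ} (hq : Continuous q) {v : E → F}
    (hv : ContDiff ℝ 2 v) : Continuous (schrodinger h q v) :=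
  ((continuous_laplacian hv).const_smul _).add (hq.smul hv.continuous)

end Operators

section Conjugation

variable {ι E F : Type*} [Fintype ι] [NormedAddCommGroup E] [InnerProductSpace ℝ E]
  [NormedAddCommGroup F] [NormedSpace ℝ F] {e : E} {a h : ℝ} {u : E → F}

lemma norm_expTwist_sq (e : E) (a h : ℝ) (u : E → F) (x : E) :
    ‖expTwist e a h u x‖ ^ 2 = Real.exp (2 * convexWeight e a x / h) * ‖u x‖ ^ 2 := by
  rw [expTwist, norm_smul, mul_pow, Real.norm_of_nonneg (Real.exp_pos _).le, ← Real.exp_nat_mul]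
  ring_nf

lemma tsupport_expTwist_subset : tsupport (expTwist e a h u) ⊆ tsupport u :=
  closure_mono fun x hx hu => hx (by simp [expTwist, hu])

lemma contDiff_expTwist {n : ℕ∞ω} (hu : ContDiff ℝ n u) : ContDiff ℝ n (expTwist e a h u) :=
  ((contDiff_convexWeight e a).div_const h).exp.smul hu

lemma fderiv_expTwist {x : E} (hu : DifferentiableAt ℝ u x) (c : E) :
    fderiv ℝ (expTwist e a h u) x c =
      expTwist e a h (fun y => fderiv ℝ u y c + (affineCoord e a y * ⟪e, c⟫_ℝ / h) • u y) x := by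
  have hexp := ((hasFDerivAt_convexWeight e a x).mul_const h⁻¹).exp.smul hu.hasFDerivAt
  simp only [← div_eq_mul_inv] at hexp
  have hderiv : HasFDerivAt (expTwist e a h u) _ x := hexp
  rw [hderiv.fderiv]
  simp only [div_eq_mul_inv, smul_smul, add_apply, smul_apply,
    ContinuousLinearMap.smulRight_apply, coe_innerSL_apply, smul_eq_mul, expTwist, smul_add,
    add_right_inj]
  ring_nf

lemma fderiv_fderiv_expTwist (hu : ContDiff ℝ 2 u) (x c : E) :
    fderiv ℝ (fun y => fderiv ℝ (expTwist e a h u) y c) x c =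
      Real.exp (convexWeight e a x / h) • (fderiv ℝ (fun y => fderiv ℝ u y c) x c
        + (2 * affineCoord e a x / h) • ⟪e, c⟫_ℝ • fderiv ℝ u x c
        + (⟪e, c⟫_ℝ ^ 2 * (1 / h + affineCoord e a x ^ 2 / h ^ 2)) • u x) := by
  have hu' : Differentiable ℝ u := hu.differentiable two_ne_zero
  have hc : DifferentiableAt ℝ (fun y => fderiv ℝ u y c) x :=
    (contDiff_fderiv_apply hu c).differentiable one_ne_zero x
  have hg : HasFDerivAt (fun y => affineCoord e a y * ⟪e, c⟫_ℝ / h)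
      ((⟪e, c⟫_ℝ / h) • innerSL ℝ e) x := by
    simpa only [mul_div_assoc] using (hasFDerivAt_affineCoord e a x).mul_const (⟪e, c⟫_ℝ / h)
  have hsum : HasFDerivAt
      (fun y => fderiv ℝ u y c + (affineCoord e a y * ⟪e, c⟫_ℝ / h) • u y) _ x :=
    hc.hasFDerivAt.add (hg.smul (hu' x).hasFDerivAt)
  rw [funext fun y => fderiv_expTwist (a := a) (h := h) (e := e) (hu' y) c,
    fderiv_expTwist hsum.differentiableAt, expTwist, hsum.fderiv]
  simp only [add_apply, smul_apply, ContinuousLinearMap.smulRight_apply, coe_innerSL_apply,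
    smul_eq_mul, smul_add]
  module

lemma exp_mul_norm_fderiv_sq_le (hh : h ≠ 0) {x : E} (hu : DifferentiableAt ℝ u x) (c : E) :
    Real.exp (2 * convexWeight e a x / h) * (h ^ 2 * ‖fderiv ℝ u x c‖ ^ 2) ≤
      2 * h ^ 2 * ‖fderiv ℝ (expTwist e a h u) x c‖ ^ 2
        + 2 * affineCoord e a x ^ 2 * ‖expTwist e a h u x‖ ^ 2 * ⟪e, c⟫_ℝ ^ 2 := by
  set v := expTwist e a h u with hv
  set g := affineCoord e a x with hg
  have hdecomp : h • expTwist e a h (fun y => fderiv ℝ u y c) x =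
      h • fderiv ℝ v x c - (g * ⟪e, c⟫_ℝ) • v x := by
    rw [hv, fderiv_expTwist hu]
    simp only [expTwist, ← hg]
    match_scalars <;> field_simp
    ring
  calc Real.exp (2 * convexWeight e a x / h) * (h ^ 2 * ‖fderiv ℝ u x c‖ ^ 2)
      = ‖h • expTwist e a h (fun y => fderiv ℝ u y c) x‖ ^ 2 := by
        rw [norm_smul, mul_pow, norm_expTwist_sq, Real.norm_eq_abs, sq_abs]
        ring
    _ ≤ 2 * ‖h • fderiv ℝ v x c‖ ^ 2 + 2 * ‖(g * ⟪e, c⟫_ℝ) • v x‖ ^ 2 := by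
        rw [hdecomp]
        have htri := norm_sub_le (h • fderiv ℝ v x c) ((g * ⟪e, c⟫_ℝ) • v x)
        linarith [pow_le_pow_left₀ (norm_nonneg _) htri 2,
          add_sq_le (a := ‖h • fderiv ℝ v x c‖) (b := ‖(g * ⟪e, c⟫_ℝ) • v x‖)]
    _ = 2 * h ^ 2 * ‖fderiv ℝ v x c‖ ^ 2 + 2 * g ^ 2 * ‖v x‖ ^ 2 * ⟪e, c⟫_ℝ ^ 2 := by
        simp only [norm_smul, mul_pow, Real.norm_eq_abs, sq_abs]
        ring

lemma exp_mul_energy_le_twistedEnergy (b : OrthonormalBasis ι ℝ E) (he : ‖e‖ = 1) (hh : h ≠ 0)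
    {x : E} (hu : DifferentiableAt ℝ u x) :
    Real.exp (2 * convexWeight e a x / h) * (‖u x‖ ^ 2 + h ^ 2 * fderivSqNorm b u x) ≤
      twistedEnergy b e a h (expTwist e a h u) x := by
  have hnorm : ∑ i, ⟪e, b i⟫_ℝ ^ 2 = 1 := by rw [b.sum_sq_inner_left, he, one_pow]
  have hsum := Finset.sum_le_sum fun i (_ : i ∈ Finset.univ) =>
    exp_mul_norm_fderiv_sq_le (e := e) (a := a) hh hu (b i)
  rw [Finset.sum_add_distrib, ← Finset.mul_sum, ← Finset.mul_sum, ← Finset.mul_sum,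
    ← Finset.mul_sum, hnorm] at hsum
  unfold twistedEnergy fderivSqNorm
  linarith [norm_expTwist_sq e a h u x]

variable [FiniteDimensional ℝ E]

lemma laplacian_expTwist (he : ‖e‖ = 1) (hu : ContDiff ℝ 2 u) (x : E) :
    Δ (expTwist e a h u) x = Real.exp (convexWeight e a x / h) • (Δ u x
      + (2 * affineCoord e a x / h) • fderiv ℝ u x e
      + (1 / h + affineCoord e a x ^ 2 / h ^ 2) • u x) := by
  let b := stdOrthonormalBasis ℝ E
  have hnorm : ∑ i, ⟪e, b i⟫_ℝ ^ 2 = 1 := by rw [b.sum_sq_inner_left, he, one_pow]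
  rw [laplacian_eq_sum_fderiv_fderiv b (contDiff_expTwist hu), laplacian_eq_sum_fderiv_fderiv b hu]
  simp_rw [fderiv_fderiv_expTwist hu]
  rw [← Finset.smul_sum, Finset.sum_add_distrib, Finset.sum_add_distrib, ← Finset.smul_sum,
    ← Finset.sum_smul, ← Finset.sum_mul, hnorm, one_mul, sum_inner_smul_apply]

lemma schrodinger_add_skewTransport_expTwist (he : ‖e‖ = 1) (hh : h ≠ 0) (W : E → ℝ)
    (hu : ContDiff ℝ 2 u) (x : E) :
    schrodinger h (fun y => W y - affineCoord e a y ^ 2) (expTwist e a h u) x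
        + h • skewTransport e a (expTwist e a h u) x =
      expTwist e a h (schrodinger h W u) x := by
  simp only [schrodinger, skewTransport, laplacian_expTwist he hu,
    fderiv_expTwist (hu.differentiable two_ne_zero x), real_inner_self_eq_norm_sq, he, expTwist]
  match_scalars <;> field_simp <;> ring

end Conjugation

section SkewTransport

variable {E F : Type*} [NormedAddCommGroup E] [InnerProductSpace ℝ E] [NormedAddCommGroup F]
  {e : E} {v : E → F}

lemma contDiff_skewTransport [NormedSpace ℝ F] (e : E) (a : ℝ) (hv : ContDiff ℝ 2 v) :
    ContDiff ℝ 1 (skewTransport e a v) :=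
  ((contDiff_const.mul (contDiff_affineCoord e a)).smul (contDiff_fderiv_apply hv e)).add
    (hv.of_le one_le_two)

lemma fderiv_skewTransport [NormedSpace ℝ F] (e : E) (a : ℝ) (hv : ContDiff ℝ 2 v) (x c : E) :
    fderiv ℝ (skewTransport e a v) x c =
      skewTransport e a (fun y => fderiv ℝ v y c) x + (2 * ⟪e, c⟫_ℝ) • fderiv ℝ v x e := by
  have hv' := (hv.differentiable two_ne_zero x).hasFDerivAt
  have hve := ((contDiff_fderiv_apply hv e).differentiable one_ne_zero x).hasFDerivAt
  have hderiv : HasFDerivAt (skewTransport e a v) _ x :=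
    (((hasFDerivAt_affineCoord e a x).const_mul 2).smul hve).add hv'
  rw [hderiv.fderiv]
  simp only [add_apply, smul_apply, fderiv_fderiv_apply_comm hv x e c,
    ContinuousLinearMap.smulRight_apply, coe_innerSL_apply, smul_eq_mul, skewTransport]
  module

lemma fderiv_mul_affineCoord_mul_norm_sq [InnerProductSpace ℝ F] (he : ‖e‖ = 1) (a : ℝ)
    {q : E → ℝ} {x : E} (hq : DifferentiableAt ℝ q x) (hv : DifferentiableAt ℝ v x) :
    fderiv ℝ (fun y => q y * affineCoord e a y * ‖v y‖ ^ 2) x e =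
      fderiv ℝ q x e * affineCoord e a x * ‖v x‖ ^ 2 + q x * ⟪v x, skewTransport e a v x⟫_ℝ := by
  have hderiv : HasFDerivAt (fun y => q y * affineCoord e a y * ‖v y‖ ^ 2) _ x :=
    (hq.hasFDerivAt.mul (hasFDerivAt_affineCoord e a x)).mul hv.hasFDerivAt.norm_sq
  rw [hderiv.fderiv]
  simp only [Pi.mul_apply, add_apply, smul_apply, ContinuousLinearMap.comp_apply,
    coe_innerSL_apply, nsmul_eq_mul, Nat.cast_ofNat, smul_eq_mul, real_inner_self_eq_norm_sq, he,
    skewTransport, inner_add_right, real_inner_smul_right]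
  ring

end SkewTransport

section Commutator

variable {ι E F : Type*} [Fintype ι] [NormedAddCommGroup E] [InnerProductSpace ℝ E]
  [FiniteDimensional ℝ E] [MeasurableSpace E] [BorelSpace E] {μ : Measure E}
  [NormedAddCommGroup F] [InnerProductSpace ℝ F] {e : E} {v : E → F} {q : E → ℝ}

lemma integral_inner_laplacian_eq_sum [IsFiniteMeasureOnCompacts μ] (b : OrthonormalBasis ι ℝ E)
    (hv : ContDiff ℝ 2 v) (hsupp : HasCompactSupport v) {w : E → F} (hw : Continuous w) :
    ∫ x, ⟪Δ v x, w x⟫_ℝ ∂μ =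
      ∑ i, ∫ x, ⟪fderiv ℝ (fun y => fderiv ℝ v y (b i)) x (b i), w x⟫_ℝ ∂μ := by
  simp_rw [laplacian_eq_sum_fderiv_fderiv b hv, sum_inner]
  exact integral_finsetSum _ fun i _ => integrable_of_eq_zero_off_tsupport hsupp
    ((continuous_fderiv_apply (contDiff_fderiv_apply hv (b i)) (b i)).inner hw) fun x hx => by
      simp [fderiv_of_notMem_tsupport ℝ fun h => hx (tsupport_fderiv_apply_subset ℝ (b i) h)]

variable [μ.IsAddHaarMeasure]

lemma integral_mul_inner_skewTransport (he : ‖e‖ = 1) (a : ℝ) (hq : ContDiff ℝ 1 q)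
    (hv : ContDiff ℝ 1 v) (hsupp : HasCompactSupport v) :
    ∫ x, q x * ⟪v x, skewTransport e a v x⟫_ℝ ∂μ =
      -∫ x, fderiv ℝ q x e * affineCoord e a x * ‖v x‖ ^ 2 ∂μ := by
  have hg := contDiff_affineCoord (n := 1) e a
  have hzero := integral_fderiv_apply_eq_zero (μ := μ)
    (f := fun y => q y * affineCoord e a y * ‖v y‖ ^ 2) ((hq.mul hg).mul (hv.norm_sq ℝ))
    (HasCompactSupport.intro hsupp fun x hx => by simp [image_eq_zero_of_notMem_tsupport hx]) e
  simp_rw [fun x => fderiv_mul_affineCoord_mul_norm_sq he a (hq.differentiable one_ne_zero x)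
    (hv.differentiable one_ne_zero x)] at hzero
  rw [integral_add] at hzero
  · linarith
  · exact integrable_of_eq_zero_off_tsupport hsupp
      (((continuous_fderiv_apply hq e).mul hg.continuous).mul (hv.continuous.norm.pow 2))
      fun x hx => by simp [image_eq_zero_of_notMem_tsupport hx]
  · exact integrable_of_eq_zero_off_tsupport hsupp
      (hq.continuous.mul (hv.continuous.inner (continuous_skewTransport e a hv)))
      fun x hx => by simp [image_eq_zero_of_notMem_tsupport hx]

lemma integral_inner_skewTransport_eq_zero (he : ‖e‖ = 1) (a : ℝ)
    (hv : ContDiff ℝ 1 v) (hsupp : HasCompactSupport v) :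
    ∫ x, ⟪v x, skewTransport e a v x⟫_ℝ ∂μ = 0 := by
  simpa using integral_mul_inner_skewTransport (μ := μ) he a
    (contDiff_const (c := (1 : ℝ))) hv hsupp

lemma integral_inner_fderiv_fderiv_skewTransport (he : ‖e‖ = 1) (a : ℝ)
    (hv : ContDiff ℝ 2 v) (hsupp : HasCompactSupport v) (c : E) :
    ∫ x, ⟪fderiv ℝ (fun y => fderiv ℝ v y c) x c, skewTransport e a v x⟫_ℝ ∂μ =
      -∫ x, 2 * ⟪⟪e, c⟫_ℝ • fderiv ℝ v x c, fderiv ℝ v x e⟫_ℝ ∂μ := by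
  have hvc := contDiff_fderiv_apply hv c
  have hv1 : ContDiff ℝ 1 v := hv.of_le one_le_two
  have hT := contDiff_skewTransport e a hv
  have hsuppT : HasCompactSupport (skewTransport e a v) := HasCompactSupport.intro hsupp
    fun _ hx => skewTransport_of_notMem_tsupport e a hx
  rw [integral_inner_fderiv_left_eq_neg_right hvc hT hsuppT, neg_inj]
  calc ∫ x, ⟪fderiv ℝ v x c, fderiv ℝ (skewTransport e a v) x c⟫_ℝ ∂μ
      = ∫ x, (⟪fderiv ℝ v x c, skewTransport e a (fun y => fderiv ℝ v y c) x⟫_ℝ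
          + 2 * ⟪⟪e, c⟫_ℝ • fderiv ℝ v x c, fderiv ℝ v x e⟫_ℝ) ∂μ := by
        simp_rw [fderiv_skewTransport e a hv, inner_add_right, real_inner_smul_right,
          real_inner_smul_left, mul_assoc]
    _ = ∫ x, 2 * ⟪⟪e, c⟫_ℝ • fderiv ℝ v x c, fderiv ℝ v x e⟫_ℝ ∂μ := by
        rw [integral_add, integral_inner_skewTransport_eq_zero he a hvc (hsupp.fderiv_apply ℝ c),
          zero_add]
        · exact integrable_of_eq_zero_off_tsupport hsupp
            (hvc.continuous.inner (continuous_skewTransport e a hvc))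
            fun x hx => by simp [fderiv_of_notMem_tsupport ℝ hx]
        · exact integrable_of_eq_zero_off_tsupport hsupp
            (continuous_const.mul
              ((hvc.continuous.const_smul _).inner (continuous_fderiv_apply hv1 e)))
            fun x hx => by simp [fderiv_of_notMem_tsupport ℝ hx]

lemma integral_inner_laplacian_skewTransport (he : ‖e‖ = 1) (a : ℝ)
    (hv : ContDiff ℝ 2 v) (hsupp : HasCompactSupport v) :
    ∫ x, ⟪Δ v x, skewTransport e a v x⟫_ℝ ∂μ = -∫ x, 2 * ‖fderiv ℝ v x e‖ ^ 2 ∂μ := by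
  let b := stdOrthonormalBasis ℝ E
  have hv1 : ContDiff ℝ 1 v := hv.of_le one_le_two
  rw [integral_inner_laplacian_eq_sum b hv hsupp (continuous_skewTransport e a hv1)]
  simp_rw [integral_inner_fderiv_fderiv_skewTransport he a hv hsupp]
  rw [Finset.sum_neg_distrib, ← integral_finsetSum]
  · simp_rw [← Finset.mul_sum, ← sum_inner, sum_inner_smul_apply, real_inner_self_eq_norm_sq]
  · exact fun i _ => integrable_of_eq_zero_off_tsupport hsupp
      (continuous_const.mul (((continuous_fderiv_apply hv1 (b i)).const_smul _).inner
        (continuous_fderiv_apply hv1 e)))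
      fun x hx => by simp [fderiv_of_notMem_tsupport ℝ hx]

lemma integral_inner_laplacian_self (b : OrthonormalBasis ι ℝ E)
    (hv : ContDiff ℝ 2 v) (hsupp : HasCompactSupport v) :
    ∫ x, ⟪Δ v x, v x⟫_ℝ ∂μ = -∫ x, fderivSqNorm b v x ∂μ := by
  have hv1 : ContDiff ℝ 1 v := hv.of_le one_le_two
  unfold fderivSqNorm
  rw [integral_inner_laplacian_eq_sum b hv hsupp hv.continuous, integral_finsetSum,
    ← Finset.sum_neg_distrib]
  · refine Finset.sum_congr rfl fun i _ => ?_
    rw [integral_inner_fderiv_left_eq_neg_right (contDiff_fderiv_apply hv (b i)) hv1 hsupp]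
    simp_rw [real_inner_self_eq_norm_sq]
  · exact fun i _ => integrable_of_eq_zero_off_tsupport hsupp
      ((continuous_fderiv_apply hv1 (b i)).norm.pow 2)
      fun x hx => by simp [fderiv_of_notMem_tsupport ℝ hx]

end Commutator

section CarlemanEstimate

variable {ι E F : Type*} [Fintype ι] [NormedAddCommGroup E] [InnerProductSpace ℝ E]
  [NormedAddCommGroup F] [InnerProductSpace ℝ F]

/-- With `A = schrodinger h (W - g ^ 2) v x`, `B = skewTransport e a v x` and `d = ∂ₑv x`, the last
two brackets are the commutator and energy identities before integration: both integrate to `0`. -/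
lemma weighted_energy_le_norm_sq_add (A B d v : F)
    {h g W W' M G : ℝ} (h_pos : 0 < h) (h_le : h ≤ 1) (hW : |W| ≤ M) (hW' : |W'| ≤ M)
    (hg : M + 1 ≤ g) :
    h * (2 * h ^ 2 * G + (2 * g ^ 2 + 1) * ‖v‖ ^ 2) ≤
      2 * ‖A + h • B‖ ^ 2
        + 4 * h * ((2 * h ^ 2 * ‖d‖ ^ 2 - (W' - 2 * g) * g * ‖v‖ ^ 2) - ⟪A, B⟫_ℝ)
        + 2 * h * ((h ^ 2 * G + (W - g ^ 2) * ‖v‖ ^ 2) - ⟪A, v⟫_ℝ) := by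
  have hM : 0 ≤ M := (abs_nonneg W).trans hW
  have hsum : ‖A + h • B‖ ^ 2 = ‖A‖ ^ 2 + 2 * h * ⟪A, B⟫_ℝ + h ^ 2 * ‖B‖ ^ 2 := by
    rw [norm_add_sq_real, real_inner_smul_right, norm_smul, mul_pow, Real.norm_eq_abs, sq_abs]
    ring
  have hcross : 2 * h * ⟪A, v⟫_ℝ ≤ 2 * ‖A‖ ^ 2 + h / 2 * ‖v‖ ^ 2 := by
    have hsq : ‖A - (h / 2) • v‖ ^ 2 = ‖A‖ ^ 2 - h * ⟪A, v⟫_ℝ + h ^ 2 / 4 * ‖v‖ ^ 2 := by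
      rw [norm_sub_sq_real, real_inner_smul_right, norm_smul, mul_pow, Real.norm_eq_abs, sq_abs]
      ring
    have hh : h ^ 2 * ‖v‖ ^ 2 ≤ h * ‖v‖ ^ 2 := by gcongr; nlinarith
    linarith [sq_nonneg ‖A - (h / 2) • v‖]
  have hcoeff : 0 ≤ 4 * g ^ 2 - 4 * W' * g + 2 * W - 3 / 2 := by
    nlinarith [le_of_abs_le hW', neg_le_of_abs_le hW]
  have hv : 0 ≤ h * (4 * g ^ 2 - 4 * W' * g + 2 * W - 3 / 2) * ‖v‖ ^ 2 := by positivity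
  have hB : 0 ≤ h ^ 2 * ‖B‖ ^ 2 := by positivity
  have hd : 0 ≤ h ^ 3 * ‖d‖ ^ 2 := by positivity
  rw [hsum]
  linarith

variable [MeasurableSpace E] [BorelSpace E] {μ : Measure E} {e : E} {v : E → F}
  {q : E → ℝ}

lemma integrable_twistedEnergy [IsFiniteMeasureOnCompacts μ] (b : OrthonormalBasis ι ℝ E) (e : E)
    (a h : ℝ) (hv : ContDiff ℝ 1 v) (hsupp : HasCompactSupport v) :
    Integrable (twistedEnergy b e a h v) μ :=
  integrable_of_eq_zero_off_tsupport hsupp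
    ((continuous_const.mul (continuous_fderivSqNorm b hv)).add
      (((continuous_const.mul ((contDiff_affineCoord (n := 0) e a).continuous.pow 2)).add
        continuous_const).mul (hv.continuous.norm.pow 2)))
    fun _ hx => twistedEnergy_of_notMem_tsupport b e a h hx

lemma integrable_commutatorDensity [IsFiniteMeasureOnCompacts μ] (e : E) (a h : ℝ)
    (hq : ContDiff ℝ 1 q) (hv : ContDiff ℝ 1 v) (hsupp : HasCompactSupport v) :
    Integrable (commutatorDensity e a h q v) μ :=
  integrable_of_eq_zero_off_tsupport hsupp
    ((continuous_const.mul ((continuous_fderiv_apply hv e).norm.pow 2)).sub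
      (((continuous_fderiv_apply hq e).mul (contDiff_affineCoord (n := 0) e a).continuous).mul
        (hv.continuous.norm.pow 2)))
    fun _ hx => commutatorDensity_of_notMem_tsupport e a h q hx

lemma integrable_energyDensity [IsFiniteMeasureOnCompacts μ] (b : OrthonormalBasis ι ℝ E) (h : ℝ)
    (hq : Continuous q) (hv : ContDiff ℝ 1 v) (hsupp : HasCompactSupport v) :
    Integrable (energyDensity b h q v) μ :=
  integrable_of_eq_zero_off_tsupport hsupp
    ((continuous_const.mul (continuous_fderivSqNorm b hv)).add
      (hq.mul (hv.continuous.norm.pow 2)))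
    fun _ hx => energyDensity_of_notMem_tsupport b h q hx

variable [FiniteDimensional ℝ E]

lemma integrable_inner_schrodinger [IsFiniteMeasureOnCompacts μ] (h : ℝ) (hq : Continuous q)
    (hv : ContDiff ℝ 2 v) (hsupp : HasCompactSupport v) {w : E → F} (hw : Continuous w) :
    Integrable (fun x => ⟪schrodinger h q v x, w x⟫_ℝ) μ :=
  integrable_of_eq_zero_off_tsupport hsupp ((continuous_schrodinger h hq hv).inner hw)
    fun x hx => by simp [schrodinger_of_notMem_tsupport h q hx]

variable [μ.IsAddHaarMeasure]

lemma integral_inner_schrodinger_skewTransport (he : ‖e‖ = 1) (a h : ℝ) (hq : ContDiff ℝ 1 q)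
    (hv : ContDiff ℝ 2 v) (hsupp : HasCompactSupport v) :
    ∫ x, ⟪schrodinger h q v x, skewTransport e a v x⟫_ℝ ∂μ =
      ∫ x, commutatorDensity e a h q v x ∂μ := by
  have hv1 : ContDiff ℝ 1 v := hv.of_le one_le_two
  have hT := continuous_skewTransport e a hv1
  have hg := (contDiff_affineCoord (n := 0) e a).continuous
  simp only [commutatorDensity, schrodinger, inner_add_left, real_inner_smul_left]
  rw [integral_add, integral_sub, integral_const_mul, integral_const_mul,
    integral_inner_laplacian_skewTransport he a hv hsupp, integral_const_mul,
    integral_mul_inner_skewTransport he a hq hv1 hsupp]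
  · ring
  · exact integrable_of_eq_zero_off_tsupport hsupp
      (continuous_const.mul ((continuous_fderiv_apply hv1 e).norm.pow 2))
      fun x hx => by simp [fderiv_of_notMem_tsupport ℝ hx]
  · exact integrable_of_eq_zero_off_tsupport hsupp
      (((continuous_fderiv_apply hq e).mul hg).mul (hv.continuous.norm.pow 2))
      fun x hx => by simp [image_eq_zero_of_notMem_tsupport hx]
  · exact integrable_of_eq_zero_off_tsupport hsupp
      (continuous_const.mul ((continuous_laplacian hv).inner hT))
      fun x hx => by simp [laplacian_of_notMem_tsupport hx]
  · exact integrable_of_eq_zero_off_tsupport hsupp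
      (hq.continuous.mul (hv.continuous.inner hT))
      fun x hx => by simp [image_eq_zero_of_notMem_tsupport hx]

lemma integral_inner_schrodinger_self (b : OrthonormalBasis ι ℝ E) (h : ℝ) (hq : Continuous q)
    (hv : ContDiff ℝ 2 v) (hsupp : HasCompactSupport v) :
    ∫ x, ⟪schrodinger h q v x, v x⟫_ℝ ∂μ =
      ∫ x, energyDensity b h q v x ∂μ := by
  have hG := continuous_fderivSqNorm b (hv.of_le one_le_two)
  have hqv : Integrable (fun x => q x * ‖v x‖ ^ 2) μ :=
    integrable_of_eq_zero_off_tsupport hsupp (hq.mul (hv.continuous.norm.pow 2))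
      fun x hx => by simp [image_eq_zero_of_notMem_tsupport hx]
  simp only [energyDensity, schrodinger, inner_add_left, real_inner_smul_left,
    real_inner_self_eq_norm_sq]
  rw [integral_add _ hqv, integral_add _ hqv, integral_const_mul, integral_const_mul,
    integral_inner_laplacian_self b hv hsupp]
  · ring
  · exact integrable_of_eq_zero_off_tsupport hsupp (continuous_const.mul hG)
      fun x hx => by simp [fderivSqNorm_of_notMem_tsupport b hx]
  · exact integrable_of_eq_zero_off_tsupport hsupp
      (continuous_const.mul ((continuous_laplacian hv).inner hv.continuous))
      fun x hx => by simp [laplacian_of_notMem_tsupport hx]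

lemma carleman_estimate_conjugated (b : OrthonormalBasis ι ℝ E) (he : ‖e‖ = 1) {a h M : ℝ}
    (h_pos : 0 < h) (h_le : h ≤ 1) {W : E → ℝ} (hW : ContDiff ℝ 1 W) (hv : ContDiff ℝ 2 v)
    (hsupp : HasCompactSupport v) (hWb : ∀ x ∈ tsupport v, |W x| ≤ M)
    (hW'b : ∀ x ∈ tsupport v, |fderiv ℝ W x e| ≤ M)
    (hg : ∀ x ∈ tsupport v, M + 1 ≤ affineCoord e a x) :
    h * ∫ x, twistedEnergy b e a h v x ∂μ ≤
      2 * ∫ x, ‖schrodinger h (fun y => W y - affineCoord e a y ^ 2) v x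
        + h • skewTransport e a v x‖ ^ 2 ∂μ := by
  set q : E → ℝ := fun y => W y - affineCoord e a y ^ 2
  have hv1 : ContDiff ℝ 1 v := hv.of_le one_le_two
  have hq : ContDiff ℝ 1 q := hW.sub ((contDiff_affineCoord e a).pow 2)
  have hAcont := continuous_schrodinger h hq.continuous hv
  have hBcont := continuous_skewTransport e a hv1
  have henergy := integrable_twistedEnergy (μ := μ) b e a h hv1 hsupp
  have hsq : Integrable (fun x => ‖schrodinger h q v x + h • skewTransport e a v x‖ ^ 2) μ :=
    integrable_of_eq_zero_off_tsupport hsupp ((hAcont.add (hBcont.const_smul h)).norm.pow 2)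
      fun x hx => by
        simp [schrodinger_of_notMem_tsupport h q hx, skewTransport_of_notMem_tsupport e a hx]
  have hP := integrable_commutatorDensity (μ := μ) e a h hq hv1 hsupp
  have hQ := integrable_energyDensity (μ := μ) b h hq.continuous hv1 hsupp
  have hAB := integrable_inner_schrodinger (μ := μ) h hq.continuous hv hsupp hBcont
  have hAv := integrable_inner_schrodinger (μ := μ) h hq.continuous hv hsupp hv.continuous
  have hsqP := (hsq.const_mul 2).add ((hP.sub hAB).const_mul (4 * h))
  have hmono := integral_mono (henergy.const_mul h) (hsqP.add ((hQ.sub hAv).const_mul (2 * h)))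
    fun x => ?_
  · rw [integral_const_mul] at hmono
    refine hmono.trans_eq ?_
    rw [integral_add' hsqP ((hQ.sub hAv).const_mul _),
      integral_add' (hsq.const_mul 2) ((hP.sub hAB).const_mul _), integral_const_mul,
      integral_const_mul, integral_const_mul, integral_sub' hP hAB, integral_sub' hQ hAv,
      integral_inner_schrodinger_skewTransport he a h hq hv hsupp,
      integral_inner_schrodinger_self b h hq.continuous hv hsupp]
    ring
  · by_cases hx : x ∈ tsupport v
    · have hpt := weighted_energy_le_norm_sq_add (schrodinger h q v x) (skewTransport e a v x)
        (fderiv ℝ v x e) (v x) (G := fderivSqNorm b v x) h_pos h_le (hWb x hx) (hW'b x hx) (hg x hx)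
      rwa [← fderiv_sub_affineCoord_sq he a (hW.differentiable one_ne_zero x)] at hpt
    · simp [image_eq_zero_of_notMem_tsupport hx, twistedEnergy_of_notMem_tsupport b e a h hx,
        commutatorDensity_of_notMem_tsupport e a h q hx, energyDensity_of_notMem_tsupport b h q hx,
        schrodinger_of_notMem_tsupport h q hx, skewTransport_of_notMem_tsupport e a hx]

lemma carleman_estimate (b : OrthonormalBasis ι ℝ E) (he : ‖e‖ = 1) {a h M : ℝ}
    (h_pos : 0 < h) (h_le : h ≤ 1) {W : E → ℝ} (hW : ContDiff ℝ 1 W) {u : E → F}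
    (hu : ContDiff ℝ 2 u) (hsupp : HasCompactSupport u) (hWb : ∀ x ∈ tsupport u, |W x| ≤ M)
    (hW'b : ∀ x ∈ tsupport u, |fderiv ℝ W x e| ≤ M)
    (hg : ∀ x ∈ tsupport u, M + 1 ≤ affineCoord e a x) :
    h * ∫ x, Real.exp (2 * convexWeight e a x / h)
        * (‖u x‖ ^ 2 + h ^ 2 * fderivSqNorm b u x) ∂μ ≤
      2 * ∫ x, Real.exp (2 * convexWeight e a x / h) * ‖schrodinger h W u x‖ ^ 2 ∂μ := by
  set v := expTwist e a h u
  have hvu : tsupport v ⊆ tsupport u := tsupport_expTwist_subset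
  have hv : ContDiff ℝ 2 v := contDiff_expTwist hu
  have hsuppv : HasCompactSupport v := hsupp.of_isClosed_subset (isClosed_tsupport v) hvu
  calc h * ∫ x, Real.exp (2 * convexWeight e a x / h)
        * (‖u x‖ ^ 2 + h ^ 2 * fderivSqNorm b u x) ∂μ
      ≤ h * ∫ x, twistedEnergy b e a h v x ∂μ := by
        refine mul_le_mul_of_nonneg_left (integral_mono_of_nonneg (.of_forall fun x => ?_)
          (integrable_twistedEnergy b e a h (hv.of_le one_le_two) hsuppv)
          (.of_forall fun x => exp_mul_energy_le_twistedEnergy b he h_pos.ne'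
            (hu.differentiable two_ne_zero x))) h_pos.le
        have := fderivSqNorm_nonneg b u x
        positivity
    _ ≤ 2 * ∫ x, ‖schrodinger h (fun y => W y - affineCoord e a y ^ 2) v x
          + h • skewTransport e a v x‖ ^ 2 ∂μ :=
        carleman_estimate_conjugated b he h_pos h_le hW hv hsuppv (fun x hx => hWb x (hvu hx))
          (fun x hx => hW'b x (hvu hx)) fun x hx => hg x (hvu hx)
    _ = 2 * ∫ x, Real.exp (2 * convexWeight e a x / h) * ‖schrodinger h W u x‖ ^ 2 ∂μ := by
        simp_rw [v, schrodinger_add_skewTransport_expTwist he h_pos.ne' W hu, norm_expTwist_sq]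

end CarlemanEstimate

theorem stmt17_general {ι E F : Type*} [Fintype ι] [NormedAddCommGroup E] [InnerProductSpace ℝ E]
    [FiniteDimensional ℝ E] [MeasurableSpace E] [BorelSpace E] (μ : Measure E)
    [μ.IsAddHaarMeasure] [NormedAddCommGroup F] [InnerProductSpace ℝ F]
    (b : OrthonormalBasis ι ℝ E) {e : E} (he : ‖e‖ = 1) {Ω : Set E} (hΩ : Bornology.IsBounded Ω)
    (M : ℝ) :
    ∃ φ : E → ℝ, ContDiff ℝ (⊤ : ℕ∞) φ ∧ (∀ x, 0 < φ x) ∧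
      ∃ h₀ > (0 : ℝ), ∃ C > (0 : ℝ),
        ∀ W : E → ℝ, ContDiff ℝ 1 W →
          (∀ x ∈ Ω, |W x| ≤ M) → (∀ x ∈ Ω, |fderiv ℝ W x e| ≤ M) →
          ∀ h : ℝ, 0 < h → h ≤ h₀ →
            ∀ u : E → F, ContDiff ℝ 2 u → HasCompactSupport u → tsupport u ⊆ Ω →
              h * ∫ x in Ω, Real.exp (2 * φ x / h) *
                  (‖u x‖ ^ 2 + h ^ 2 * fderivSqNorm b u x) ∂μ ≤
                C * ∫ x in Ω, Real.exp (2 * φ x / h) * ‖schrodinger h W u x‖ ^ 2 ∂μ := by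
  obtain ⟨R, hR⟩ := hΩ.exists_norm_le
  refine ⟨convexWeight e (R + (M + 1)), contDiff_convexWeight e _, convexWeight_pos e _,
    1, one_pos, 2, two_pos, fun W hW hWb hW'b h h_pos h_le u hu hsupp hsub => ?_⟩
  rw [setIntegral_eq_integral_of_forall_compl_eq_zero fun x hx => ?_,
    setIntegral_eq_integral_of_forall_compl_eq_zero fun x hx => ?_]
  · exact carleman_estimate b he h_pos h_le hW hu hsupp (fun x hx => hWb x (hsub hx))
      (fun x hx => hW'b x (hsub hx))
      fun x hx => le_affineCoord_of_norm_le he (hR x (hsub hx)) (M + 1)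
  · simp [schrodinger_of_notMem_tsupport h W fun hxu => hx (hsub hxu)]
  · have hxu : x ∉ tsupport u := fun hxu => hx (hsub hxu)
    simp [image_eq_zero_of_notMem_tsupport hxu, fderivSqNorm_of_notMem_tsupport b hxu]

section Euclidean

lemma norm_basis2 (i : Fin 2) : ‖basis2 i‖ = 1 := by
  simp [basis2]

lemma gradSq_eq_fderivSqNorm (u : E2 → ℂ) (x : E2) :
    gradSq u x = fderivSqNorm (EuclideanSpace.basisFun (Fin 2) ℝ) u x := by
  simp [gradSq, fderivSqNorm, basis2]

lemma lapC_eq_laplacian {u : E2 → ℂ} (hu : ContDiff ℝ 2 u) (x : E2) : lapC u x = Δ u x := by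
  simp [lapC, basis2, laplacian_eq_sum_fderiv_fderiv (EuclideanSpace.basisFun (Fin 2) ℝ) hu]

lemma schrodW_eq_schrodinger (h : ℝ) (W : E2 → ℝ) {u : E2 → ℂ} (hu : ContDiff ℝ 2 u) (x : E2) :
    schrodW h W u x = schrodinger h W u x := by
  simp [schrodW, schrodinger, lapC_eq_laplacian hu]

lemma abs_fderiv_basis2_le_gradNormR (W : E2 → ℝ) (x : E2) (i : Fin 2) :
    |fderiv ℝ W x (basis2 i)| ≤ gradNormR W x :=
  Real.abs_le_sqrt (Finset.single_le_sum (f := fun j => fderiv ℝ W x (basis2 j) ^ 2)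
    (fun _ _ => sq_nonneg _) (Finset.mem_univ i))

end Euclidean

theorem stmt17 (R₀ : ℝ) (hR₀ : 0 < R₀) :
    ∃ φ : E2 → ℝ, ContDiff ℝ (⊤ : ℕ∞) φ ∧ (∀ x, 0 < φ x) ∧
      ∃ ε > (0 : ℝ), ∃ h₀ > (0 : ℝ), ∃ C > (0 : ℝ),
        ∀ W : E2 → ℝ, ContDiff ℝ 1 W →
          (∀ x ∈ ball (0 : E2) R₀, |W x| ≤ ε) →
          (∀ x ∈ ball (0 : E2) R₀, gradNormR W x ≤ ε) →
          ∀ h : ℝ, 0 < h → h ≤ h₀ →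
            ∀ u : E2 → ℂ, ContDiff ℝ (⊤ : ℕ∞) u → HasCompactSupport u →
              tsupport u ⊆ ball (0 : E2) R₀ →
              h * ∫ x in ball (0 : E2) R₀,
                  Real.exp (2 * φ x / h) * (‖u x‖ ^ 2 + h ^ 2 * gradSq u x) ≤
                C * ∫ x in ball (0 : E2) R₀,
                  Real.exp (2 * φ x / h) * ‖schrodW h W u x‖ ^ 2 := by
  obtain ⟨φ, hφ, hφ_pos, h₀, hh₀, C, hC, hcarleman⟩ :=
    stmt17_general (F := ℂ) volume (EuclideanSpace.basisFun (Fin 2) ℝ) (norm_basis2 0)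
      (isBounded_ball (x := (0 : E2)) (r := R₀)) 1
  refine ⟨φ, hφ, hφ_pos, 1, one_pos, h₀, hh₀, C, hC,
    fun W hW hWb hW'b h h_pos h_le u hu hsupp hsub => ?_⟩
  have hu2 : ContDiff ℝ 2 u := contDiff_infty.1 hu 2
  simp_rw [gradSq_eq_fderivSqNorm, schrodW_eq_schrodinger h W hu2]
  exact hcarleman W hW hWb (fun x hx => (abs_fderiv_basis2_le_gradNormR W x 0).trans (hW'b x hx))
    h h_pos h_le u hu2 hsupp hsub
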